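/- Let r be a real number with −1 < r ≤ 1. Then for every natural number n, ∫₀⁴ x^n · cos(r · arccos(√(x/4))) / (π · √(x^{1−r}(4−x))) dx = C(2n + r, n). In particular (n = 0) the function V_{2,r}(x) = cos(r · arccos(√(x/4))) / (π √(x^{1−r}(4−x))) is a probability density on (0,4). -/

import Mathlib

open MeasureTheory Real

/-- Generalized binomial coefficient `C(a,n) = a(a-1)⋯(a-n+1)/n!`. -/
noncomputable def gbinom (a : ℝ) (n : ℕ) : ℝ :=
  (∏ i ∈ Finset.range n, (a - i)) / (n.factorial : ℝ)

/-!
Put `a = 2n + r`. Under `x = 4 cos² t` the `n`-th moment becomes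
`2 ^ (a + 1) / π * ∫₀^{π/2} cos^a t cos ((a - 2n)t) dt`. Since `1 + e^{2it} = 2 cos t e^{it}`, this
is the real part of the average of `z⁻ⁿ (1 + z)^a` over the unit circle, i.e. the `n`-th Taylor
coefficient `C(a, n)` of `(1 + z)^a` at `0`. Cauchy's formula applies up to the boundary when
`0 < a`, as `(1 + z)^a` is then continuous at `z = -1`; integration by parts relates the exponents
`a` and `a + 1` and so extends the evaluation to `-1 < a`.
-/

theorem gbinom_eq_choose (a : ℝ) (n : ℕ) : gbinom a n = Ring.choose a n := by
  rw [gbinom, ← descPochhammer_eval_eq_prod_range, Ring.choose_eq_smul, smul_eq_mul,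
    div_eq_inv_mul, ← Polynomial.aeval_eq_smeval, ← Polynomial.eval_map_algebraMap,
    descPochhammer_map]

theorem gbinom_add_one (a : ℝ) (n : ℕ) :
    (a + 1 - n) * gbinom (a + 1) n = (a + 1) * gbinom a n := by
  have h : (∏ i ∈ Finset.range n, (a + 1 - i)) * (a + 1 - n) =
      (∏ i ∈ Finset.range n, (a - i)) * (a + 1) := by
    rw [← Finset.prod_range_succ, Finset.prod_range_succ']
    simp
  simp only [gbinom]
  linear_combination h / (n.factorial : ℝ)

theorem circleAverage_inv_pow_smul {E : Type*} [NormedAddCommGroup E] [NormedSpace ℂ E]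
    [CompleteSpace E] {f : ℂ → E} {c : ℂ} {R : ℝ} {p : FormalMultilinearSeries ℂ ℂ E} (hR : 0 < R)
    (hf : DiffContOnCl ℂ f (Metric.ball c R)) (hp : HasFPowerSeriesAt f p c) (n : ℕ) :
    circleAverage (fun z ↦ ((z - c) ^ n)⁻¹ • f z) c R = p.coeff n := by
  lift R to NNReal using hR.le
  have hp' : p = cauchyPowerSeries f c R :=
    hp.eq_formalMultilinearSeries (hf.hasFPowerSeriesOnBall hR).hasFPowerSeriesAt
  rw [circleAverage_eq_circleIntegral hR.ne', hp', FormalMultilinearSeries.coeff,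
    Pi.one_def, cauchyPowerSeries_apply]
  simp_rw [one_div, inv_pow, smul_comm ((_ - c) ^ n)⁻¹]

theorem diffContOnCl_one_add_cpow {s : ℂ} (hs : 0 < s.re) :
    DiffContOnCl ℂ (fun z : ℂ ↦ (1 + z) ^ s) (Metric.ball 0 1) := by
  refine ⟨fun z hz ↦ ?_, fun z hz ↦ ?_⟩
  · have hslit : 1 + z ∈ Complex.slitPlane :=
      Complex.mem_slitPlane_of_norm_lt_one (mem_ball_zero_iff.1 hz)
    exact (DifferentiableAt.cpow_const (by fun_prop) hslit).differentiableWithinAt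
  · rw [closure_ball _ one_ne_zero, mem_closedBall_zero_iff] at hz
    have hre : 0 ≤ (1 + z).re := by
      rw [Complex.add_re, Complex.one_re]
      linarith [(abs_le.1 ((Complex.abs_re_le_norm z).trans hz)).1]
    exact ((Complex.continuousAt_cpow_const_of_re_pos (.inl hre) hs).comp (f := fun z : ℂ ↦ 1 + z)
      (by fun_prop)).continuousWithinAt

theorem circleAverage_inv_pow_mul_one_add_cpow {s : ℂ} (hs : 0 < s.re) (n : ℕ) :
    circleAverage (fun z ↦ (z ^ n)⁻¹ * (1 + z) ^ s) 0 1 = Ring.choose s n := by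
  simpa [binomialSeries] using circleAverage_inv_pow_smul one_pos (diffContOnCl_one_add_cpow hs)
    Complex.one_add_cpow_hasFPowerSeriesAt_zero n

theorem continuousOn_inv_pow_mul_one_add_cpow {s : ℂ} (hs : 0 < s.re) (n : ℕ) :
    ContinuousOn (fun z : ℂ ↦ (z ^ n)⁻¹ * (1 + z) ^ s) (Metric.sphere 0 1) := by
  have hcont : ContinuousOn (fun z : ℂ ↦ (1 + z) ^ s) (Metric.sphere 0 1) :=
    (diffContOnCl_one_add_cpow hs).continuousOn_ball.mono Metric.sphere_subset_closedBall
  exact ((continuousOn_pow n).inv₀ fun z hz ↦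
    pow_ne_zero n (ne_zero_of_mem_unit_sphere ⟨z, hz⟩)).mul hcont

theorem circleAverage_eq_integral_two_mul {E : Type*} [NormedAddCommGroup E] [NormedSpace ℝ E]
    (f : ℂ → E) (c : ℂ) (R : ℝ) :
    circleAverage f c R = π⁻¹ • ∫ t in (-(π / 2))..(π / 2), f (circleMap c R (2 * t)) := by
  rw [circleAverage_eq_integral_add (-π),
    intervalIntegral.integral_comp_add_right (fun t ↦ f (circleMap c R t)),
    intervalIntegral.integral_comp_mul_left (fun t ↦ f (circleMap c R t)) two_ne_zero, smul_smul]
  congr 2 <;> ring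

theorem one_add_circleMap_two_mul (t : ℝ) :
    1 + circleMap 0 1 (2 * t) = (2 * cos t : ℝ) * Complex.exp (t * Complex.I) := by
  have hinv : Complex.exp (-t * Complex.I) * Complex.exp (t * Complex.I) = 1 := by
    rw [← Complex.exp_add, neg_mul, neg_add_cancel, Complex.exp_zero]
  have hsq : circleMap 0 1 (2 * t) =
      Complex.exp (t * Complex.I) * Complex.exp (t * Complex.I) := by
    rw [circleMap_zero, Complex.ofReal_one, one_mul, ← Complex.exp_add]
    push_cast
    ring_nf
  push_cast
  rw [Complex.two_cos, add_mul, hinv, hsq, add_comm]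

theorem inv_pow_mul_one_add_cpow_circleMap {t : ℝ} (ht : t ∈ Set.Ioo (-(π / 2)) (π / 2)) (a : ℝ)
    (n : ℕ) :
    (circleMap 0 1 (2 * t) ^ n)⁻¹ * (1 + circleMap 0 1 (2 * t)) ^ (a : ℂ) =
      ((2 * cos t) ^ a : ℝ) * Complex.exp (((a - 2 * n) * t : ℝ) * Complex.I) := by
  have hcos : 0 < 2 * cos t := mul_pos two_pos (cos_pos_of_mem_Ioo ht)
  have hlog : Complex.log (1 + circleMap 0 1 (2 * t)) = Real.log (2 * cos t) + t * Complex.I := by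
    rw [one_add_circleMap_two_mul, Complex.log_ofReal_mul hcos (Complex.exp_ne_zero _),
      Complex.log_exp]
    · simpa using by linarith [ht.1, pi_pos]
    · simpa using by linarith [ht.2, pi_pos]
  have hne : 1 + circleMap 0 1 (2 * t) ≠ 0 := by
    rw [one_add_circleMap_two_mul]
    exact mul_ne_zero (mod_cast hcos.ne') (Complex.exp_ne_zero _)
  rw [Complex.cpow_def_of_ne_zero hne, hlog, rpow_def_of_pos hcos, circleMap_zero,
    Complex.ofReal_exp, Complex.ofReal_one, one_mul, ← Complex.exp_nat_mul, ← Complex.exp_neg,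
    ← Complex.exp_add, ← Complex.exp_add]
  congr 1
  push_cast
  ring

theorem cos_pos_of_mem_Ioo_zero_pi_div_two {t : ℝ} (ht : t ∈ Set.Ioo 0 (π / 2)) : 0 < cos t :=
  cos_pos_of_mem_Ioo ⟨by linarith [ht.1, pi_pos], ht.2⟩

theorem sin_pos_of_mem_Ioo_zero_pi_div_two {t : ℝ} (ht : t ∈ Set.Ioo 0 (π / 2)) : 0 < sin t :=
  sin_pos_of_pos_of_lt_pi ht.1 (by linarith [ht.1, ht.2])

theorem integral_comp_mul_cos_sq {E : Type*} [NormedAddCommGroup E] [NormedSpace ℝ E] (f : ℝ → E)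
    {c : ℝ} (hc : 0 ≤ c) :
    ∫ x in (0:ℝ)..c, f x =
      ∫ t in (0:ℝ)..(π / 2), (2 * c * cos t * sin t) • f (c * cos t ^ 2) := by
  have hpi := pi_div_two_pos.le
  have hderiv (t : ℝ) : HasDerivAt (fun t ↦ c * cos t ^ 2) (-(2 * c * cos t * sin t)) t :=
    (((hasDerivAt_cos t).pow 2).const_mul c).congr_deriv (by norm_num; ring)
  have hanti (t : ℝ) (ht : t ∈ Set.Ioo (min 0 (π / 2)) (max 0 (π / 2))) :
      -(2 * c * cos t * sin t) ≤ 0 := by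
    rw [min_eq_left hpi, max_eq_right hpi] at ht
    have := cos_pos_of_mem_Ioo_zero_pi_div_two ht
    have := sin_pos_of_mem_Ioo_zero_pi_div_two ht
    exact neg_nonpos.2 (by positivity)
  have h := intervalIntegral.integral_deriv_smul_comp_of_deriv_nonpos (g := f)
    (by fun_prop : Continuous fun t ↦ c * cos t ^ 2).continuousOn (fun t _ ↦ hderiv t) hanti
  simpa [intervalIntegral.integral_symm 0 c] using h.symm

theorem hasDerivAt_cos_rpow {t : ℝ} (ht : cos t ≠ 0) (a : ℝ) :
    HasDerivAt (fun t ↦ cos t ^ a) (-(a * (sin t * cos t ^ (a - 1)))) t :=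
  ((hasDerivAt_cos t).rpow_const (.inl ht)).congr_deriv (by ring)

theorem continuous_cos_rpow {a : ℝ} (ha : 0 ≤ a) : Continuous fun t : ℝ ↦ cos t ^ a :=
  continuous_cos.rpow_const fun _ ↦ .inr ha

theorem intervalIntegrable_sin_mul_cos_rpow {a : ℝ} (ha : -1 < a) :
    IntervalIntegrable (fun t ↦ sin t * cos t ^ a) volume 0 (π / 2) := by
  have hpi := pi_div_two_pos.le
  have ha' : 0 < a + 1 := by linarith
  refine intervalIntegral.intervalIntegrable_deriv_of_nonneg
    (g := fun t ↦ -(a + 1)⁻¹ * cos t ^ (a + 1))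
    ((continuous_cos_rpow ha'.le).const_mul _).continuousOn (fun t ht ↦ ?_) (fun t ht ↦ ?_)
  all_goals
    rw [min_eq_left hpi, max_eq_right hpi] at ht
    have hcos := cos_pos_of_mem_Ioo_zero_pi_div_two ht
  · refine ((hasDerivAt_cos_rpow hcos.ne' (a + 1)).const_mul _).congr_deriv ?_
    rw [add_sub_cancel_right]
    field_simp
  · have := sin_pos_of_mem_Ioo_zero_pi_div_two ht
    positivity

theorem intervalIntegrable_cos_rpow {a : ℝ} (ha : -1 < a) :
    IntervalIntegrable (fun t ↦ cos t ^ a) volume 0 (π / 2) := by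
  -- `cos^a = sin² cos^a + cos^{a+2}` reduces to `sin cos^a`, which has an explicit antiderivative.
  have hsin := (intervalIntegrable_sin_mul_cos_rpow ha).continuousOn_mul continuous_sin.continuousOn
  have hcos : IntervalIntegrable (fun t ↦ cos t * cos t ^ (a + 1)) volume 0 (π / 2) :=
    (continuous_cos.mul (continuous_cos_rpow (by linarith))).intervalIntegrable _ _
  refine (hsin.add hcos).congr_uIoo fun t ht ↦ ?_
  rw [Set.uIoo_of_le pi_div_two_pos.le] at ht
  dsimp only [Pi.add_apply]
  rw [rpow_add_one (cos_pos_of_mem_Ioo_zero_pi_div_two ht).ne']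
  linear_combination cos t ^ a * sin_sq_add_cos_sq t

theorem integral_neg_self_of_even {E : Type*} [NormedAddCommGroup E] [NormedSpace ℝ E]
    {f : ℝ → E} {c : ℝ} (hf : f.Even) (hi : IntervalIntegrable f volume 0 c) :
    ∫ t in (-c)..c, f t = (2 : ℝ) • ∫ t in (0:ℝ)..c, f t := by
  have hneg : (fun t ↦ f (-t)) = f := funext hf
  have hi' : IntervalIntegrable f volume (-c) 0 := by
    simpa [hneg] using (IntervalIntegrable.iff_comp_neg (by simp)).1 hi.symm
  have hI : ∫ t in (-c)..0, f t = ∫ t in (0:ℝ)..c, f t := by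
    rw [← neg_zero, ← intervalIntegral.integral_comp_neg, hneg, neg_zero]
  rw [← intervalIntegral.integral_add_adjacent_intervals hi' hi, hI, two_smul]

/-- Cauchy's integral `∫₀^{π/2} cos^a t cos (bt) dt`, to which the moments of `binomialDensity`
reduce under `x = 4 cos² t`. -/
noncomputable def cosPowIntegral (a b : ℝ) : ℝ :=
  ∫ t in (0:ℝ)..(π / 2), cos t ^ a * cos (b * t)

theorem cosPowIntegral_sub_two_mul_of_pos {a : ℝ} (ha : 0 < a) (n : ℕ) :
    cosPowIntegral a (a - 2 * n) = π / 2 ^ (a + 1) * gbinom a n := by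
  have hre : 0 < (a : ℂ).re := by simpa
  have hint : CircleIntegrable (fun z : ℂ ↦ (z ^ n)⁻¹ * (1 + z) ^ (a : ℂ)) 0 1 :=
    (continuousOn_inv_pow_mul_one_add_cpow hre n).circleIntegrable zero_le_one
  have hcoeff : gbinom a n =
      circleAverage (Complex.reCLM ∘ fun z : ℂ ↦ (z ^ n)⁻¹ * (1 + z) ^ (a : ℂ)) 0 1 := by
    rw [Complex.reCLM.circleAverage_comp_comm hint, circleAverage_inv_pow_mul_one_add_cpow hre,
      ← Complex.ofReal_choose, Complex.reCLM_apply, Complex.ofReal_re, gbinom_eq_choose]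
  have hcircle {t : ℝ} (ht : t ∈ Set.Ioo (-(π / 2)) (π / 2)) :
      (Complex.reCLM ∘ fun z : ℂ ↦ (z ^ n)⁻¹ * (1 + z) ^ (a : ℂ)) (circleMap 0 1 (2 * t)) =
        2 ^ a * (cos t ^ a * cos ((a - 2 * n) * t)) := by
    rw [Function.comp_apply, inv_pow_mul_one_add_cpow_circleMap ht, Complex.reCLM_apply,
      Complex.re_ofReal_mul, Complex.exp_ofReal_mul_I_re,
      mul_rpow two_pos.le (cos_pos_of_mem_Ioo ht).le, mul_assoc]
  have hcont : Continuous fun t ↦ cos t ^ a * cos ((a - 2 * n) * t) :=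
    (continuous_cos_rpow ha.le).mul (by fun_prop)
  have heven : (fun t ↦ cos t ^ a * cos ((a - 2 * n) * t)).Even := fun t ↦ by simp
  rw [hcoeff, circleAverage_eq_integral_two_mul,
    intervalIntegral.integral_congr_Ioo_of_le (by linarith [pi_pos]) fun t ht ↦ hcircle ht,
    intervalIntegral.integral_const_mul,
    integral_neg_self_of_even heven (hcont.intervalIntegrable _ _), rpow_add_one two_ne_zero,
    smul_eq_mul, smul_eq_mul, cosPowIntegral]
  field_simp

theorem mul_cosPowIntegral_sub_one {a : ℝ} (ha : 0 < a) (b : ℝ) :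
    a * cosPowIntegral (a - 1) (b - 1) = (a + b) * cosPowIntegral a b := by
  have hi {a : ℝ} (ha : -1 < a) (b : ℝ) :
      IntervalIntegrable (fun t ↦ cos t ^ a * cos (b * t)) volume 0 (π / 2) :=
    (intervalIntegrable_cos_rpow ha).mul_continuousOn (by fun_prop)
  have hi₀ := (hi (by linarith : -1 < a) b).const_mul (a + b)
  have hi₁ := (hi (by linarith : -1 < a - 1) (b - 1)).const_mul a
  have hderiv (t : ℝ) (ht : t ∈ Set.Ioo 0 (π / 2)) :
      HasDerivAt (fun t ↦ cos t ^ a * sin (b * t))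
        ((a + b) * (cos t ^ a * cos (b * t)) - a * (cos t ^ (a - 1) * cos ((b - 1) * t))) t := by
    have hcos := (cos_pos_of_mem_Ioo_zero_pi_div_two ht).ne'
    refine ((hasDerivAt_cos_rpow hcos a).mul ((hasDerivAt_id t).const_mul b).sin).congr_deriv ?_
    have hpow : cos t ^ a = cos t ^ (a - 1) * cos t := by
      rw [← rpow_add_one hcos, sub_add_cancel]
    rw [id, sub_one_mul, cos_sub, hpow]
    ring
  have hcont : Continuous fun t ↦ cos t ^ a * sin (b * t) :=
    (continuous_cos_rpow ha.le).mul (by fun_prop)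
  have hFTC := intervalIntegral.integral_eq_sub_of_hasDerivAt_of_le pi_div_two_pos.le
    hcont.continuousOn hderiv (hi₀.sub hi₁)
  rw [intervalIntegral.integral_sub hi₀ hi₁, intervalIntegral.integral_const_mul,
    intervalIntegral.integral_const_mul, cos_pi_div_two, zero_rpow ha.ne', mul_zero b, sin_zero,
    zero_mul, mul_zero, sub_zero, sub_eq_zero] at hFTC
  exact hFTC.symm

theorem cosPowIntegral_sub_two_mul {a : ℝ} (ha : -1 < a) (n : ℕ) :
    cosPowIntegral a (a - 2 * n) = π / 2 ^ (a + 1) * gbinom a n := by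
  have ha' : 0 < a + 1 := by linarith
  have hstep := mul_cosPowIntegral_sub_one ha' (a + 1 - 2 * n)
  rw [cosPowIntegral_sub_two_mul_of_pos ha', add_sub_cancel_right, sub_right_comm,
    add_sub_cancel_right, rpow_add_one two_ne_zero] at hstep
  refine mul_left_cancel₀ ha'.ne' ?_
  rw [hstep]
  linear_combination π / 2 ^ (a + 1) * gbinom_add_one a n

/-- The function `V_{2,r}` of the paper, whose moments on `(0, 4)` are the binomial sequence
`C(2n + r, n)`. -/
noncomputable def binomialDensity (r x : ℝ) : ℝ :=
  cos (r * arccos √(x / 4)) / (π * √(x ^ (1 - r) * (4 - x)))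

theorem binomialDensity_four_mul_cos_sq {t : ℝ} (ht : t ∈ Set.Ioo 0 (π / 2)) (r : ℝ) :
    binomialDensity r (4 * cos t ^ 2) =
      cos (r * t) / (π * ((2 * cos t) ^ (1 - r) * (2 * sin t))) := by
  have hcos := cos_pos_of_mem_Ioo_zero_pi_div_two ht
  have hsin := sin_pos_of_mem_Ioo_zero_pi_div_two ht
  have hangle : arccos √(4 * cos t ^ 2 / 4) = t := by
    rw [mul_div_cancel_left₀ _ four_ne_zero, sqrt_sq hcos.le,
      arccos_cos ht.1.le (by linarith [ht.1, ht.2])]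
  have hsqrt : √((4 * cos t ^ 2) ^ (1 - r) * (4 - 4 * cos t ^ 2)) =
      (2 * cos t) ^ (1 - r) * (2 * sin t) := by
    rw [sqrt_eq_iff_mul_self_eq_of_pos (by positivity),
      (by ring : 4 * cos t ^ 2 = (2 * cos t) ^ 2), ← rpow_pow_comm (by positivity)]
    linear_combination 4 * ((2 * cos t) ^ (1 - r)) ^ 2 * sin_sq_add_cos_sq t
  rw [binomialDensity, hangle, hsqrt]

theorem pow_mul_binomialDensity_four_mul_cos_sq {t : ℝ} (ht : t ∈ Set.Ioo 0 (π / 2)) (r : ℝ)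
    (n : ℕ) :
    2 * 4 * cos t * sin t * ((4 * cos t ^ 2) ^ n * binomialDensity r (4 * cos t ^ 2)) =
      2 ^ (2 * n + r + 1) / π * (cos t ^ (2 * n + r) * cos (r * t)) := by
  have hcos := cos_pos_of_mem_Ioo_zero_pi_div_two ht
  have hsin := sin_pos_of_mem_Ioo_zero_pi_div_two ht
  have hpow : 2 ^ (2 * n + r) * cos t ^ (2 * n + r) * (2 * cos t) ^ (1 - r) =
      (4 * cos t ^ 2) ^ n * (2 * cos t) := by
    rw [← mul_rpow two_pos.le hcos.le, ← rpow_add (by positivity),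
      (by ring : 4 * cos t ^ 2 = (2 * cos t) ^ 2), ← pow_mul, ← pow_succ, ← rpow_natCast]
    push_cast
    ring_nf
  rw [binomialDensity_four_mul_cos_sq ht, rpow_add_one two_ne_zero]
  field_simp
  linear_combination -(2 * cos (r * t)) * hpow

theorem density_p_two_general {r : ℝ} (hr : -1 < r) (n : ℕ) :
    ∫ x in (0:ℝ)..4, x ^ n * binomialDensity r x = gbinom (2 * n + r) n := by
  have ha : -1 < 2 * (n : ℝ) + r := by linarith [(n.cast_nonneg : (0:ℝ) ≤ n)]
  calc
    _ = ∫ t in (0:ℝ)..(π / 2), 2 * 4 * cos t * sin t *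
          ((4 * cos t ^ 2) ^ n * binomialDensity r (4 * cos t ^ 2)) :=
      integral_comp_mul_cos_sq _ (by norm_num)
    _ = ∫ t in (0:ℝ)..(π / 2), 2 ^ (2 * n + r + 1) / π * (cos t ^ (2 * n + r) * cos (r * t)) :=
      intervalIntegral.integral_congr_Ioo_of_le pi_div_two_pos.le
        fun t ht ↦ pow_mul_binomialDensity_four_mul_cos_sq ht r n
    _ = 2 ^ (2 * n + r + 1) / π * cosPowIntegral (2 * n + r) (2 * n + r - 2 * n) := by
      rw [add_sub_cancel_left, cosPowIntegral, intervalIntegral.integral_const_mul]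
    _ = gbinom (2 * n + r) n := by
      rw [cosPowIntegral_sub_two_mul ha]
      field_simp

theorem density_p_two (r : ℝ) (hr1 : -1 < r) (hr2 : r ≤ 1) (n : ℕ) :
    (∫ x in (0:ℝ)..4,
        x ^ n * (Real.cos (r * Real.arccos (Real.sqrt (x / 4)))
          / (Real.pi * Real.sqrt (x ^ (1 - r) * (4 - x)))))
      = gbinom (2 * (n : ℝ) + r) n :=
  density_p_two_general hr1 n
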